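/- arXiv:1204.1082 — 2 statements merged into one kernel-verified Lean document; each statement's English description precedes it below -/
import Mathlib

section
/- Let y_1,…,y_n be positive rationals and B = (1/2)·∑_{i=1}^n y_i. Consider the OnceSC instance with n+2 sensors: a sensor at 1/6 with battery B, n sensors at 1/2 with batteries y_1,…,y_n, and a sensor at 5/6 with battery B. If there exists a subset S ⊆ {1,…,n} with ∑_{i∈S} y_i = B, then this instance admits a feasible schedule with lifetime 8B (the maximum possible, 2·∑ batteries). -/
/-!
Split the lifetime `[0, 8B]` at `6B`. During `[0, 6B]` the two outer sensors run with radius `1/6`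
and cover `[0, 1/3]` and `[2/3, 1]`, while the sensors of the part `S` run one after the other with
radius `1/6` and cover `[1/3, 2/3]` for a total time `6 * ∑_{i ∈ S} y i = 6B`. During `[6B, 8B]`
the sensors of the complementary part, whose batteries also add up to `B`, run one after the other
with radius `1/2`, each covering all of `[0, 1]`, for a total time `2B`. The fact that consecutive
activations leave no gap in time is `exists_active`.
-/

/-- A OnceSC schedule `(ρ, τ)` for the instance with sensor index set `s`,
locations `x` and batteries `b` has lifetime `T` if every point of `[0,1]` is
covered at every time in `[0,T]`. -/
def IsLifetime (s : Finset ℕ) (x b ρ τ : ℕ → ℝ) (T : ℝ) : Prop :=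
  ∀ u ∈ Set.Icc (0:ℝ) 1, ∀ t ∈ Set.Icc (0:ℝ) T,
    ∃ i ∈ s, 0 < ρ i ∧ |u - x i| ≤ ρ i ∧ τ i ≤ t ∧ t ≤ τ i + b i / ρ i

/-- If tasks indexed by `s` are run consecutively in increasing order of index, task `i` taking time
`w i`, then every time up to the total duration falls within some task. -/
theorem exists_active (w : ℕ → ℝ) (s : Finset ℕ) (hs : s.Nonempty) (t : ℝ) (h0 : 0 ≤ t)
    (ht : t ≤ ∑ i ∈ s, w i) :
    ∃ i ∈ s, ∑ j ∈ s with j < i, w j ≤ t ∧ t ≤ ∑ j ∈ s with j < i, w j + w i := by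
  induction s using Finset.induction_on_max with
  | empty => exact absurd hs (by simp)
  | insert a s hlt ih =>
    have ha : a ∉ s := fun h => lt_irrefl _ (hlt a h)
    rcases le_or_gt (∑ i ∈ s, w i) t with h | h
    · have e : (insert a s).filter (· < a) = s := by
        rw [Finset.filter_insert, if_neg (lt_irrefl a), Finset.filter_true_of_mem hlt]
      refine ⟨a, Finset.mem_insert_self a s, ?_⟩
      rw [Finset.sum_insert ha] at ht
      rw [e]
      exact ⟨h, by linarith⟩
    · have hne : s.Nonempty := by
        rw [Finset.nonempty_iff_ne_empty]
        rintro rfl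
        simp at h
        linarith
      obtain ⟨i, hi, h1, h2⟩ := ih hne h.le
      have e : (insert a s).filter (· < i) = s.filter (· < i) := by
        rw [Finset.filter_insert, if_neg (hlt i hi).not_gt]
      refine ⟨i, Finset.mem_insert_of_mem hi, ?_⟩
      rw [e]
      exact ⟨h1, h2⟩

/-- If `{y_1,…,y_n}` has a subset summing to `B = (∑ y_i)/2`, then the OnceSC
instance with sensors at `1/6` and `5/6` of battery `B` and sensors at `1/2`
with batteries `y_1,…,y_n` admits a feasible schedule with lifetime `8B`. -/
theorem partition_implies_max_lifetime
    (n : ℕ) (hn : 1 ≤ n) (y : ℕ → ℚ)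
    (hy : ∀ i ∈ Finset.Icc 1 n, 0 < y i)
    (B : ℚ) (hB : B = (∑ i ∈ Finset.Icc 1 n, y i) / 2)
    (hpart : ∃ S ⊆ Finset.Icc 1 n, ∑ i ∈ S, y i = B) :
    ∃ ρ τ : ℕ → ℝ,
      (∀ i ∈ Finset.range (n+2), 0 ≤ ρ i) ∧
      (∀ i ∈ Finset.range (n+2), 0 ≤ τ i) ∧
      IsLifetime (Finset.range (n+2))
        (fun i => if i = 0 then 1/6 else if i = n+1 then 5/6 else 1/2)
        (fun i => if i = 0 ∨ i = n+1 then (B:ℝ) else (y i : ℝ))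
        ρ τ (8 * (B:ℝ)) := by
  obtain ⟨S, hS, hSB⟩ := hpart
  set R := Finset.Icc 1 n \ S with hR
  have hRI : ∀ i ∈ R, i ∈ Finset.Icc 1 n := fun i hi => (Finset.mem_sdiff.1 hi).1
  have hRB : ∑ i ∈ R, y i = B := by
    have := Finset.sum_sdiff (f := y) hS
    rw [← hR] at this
    linarith
  have hBpos : 0 < B := by
    have : 0 < ∑ i ∈ Finset.Icc 1 n, y i :=
      Finset.sum_pos hy ⟨1, Finset.mem_Icc.2 ⟨le_rfl, hn⟩⟩
    linarith
  have hne : ∀ A : Finset ℕ, ∑ i ∈ A, y i = B → A.Nonempty := by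
    intro A hA
    rw [Finset.nonempty_iff_ne_empty]
    rintro rfl
    simp at hA
    linarith
  have hBR : (0:ℝ) < B := by exact_mod_cast hBpos
  have hsum : ∀ (c : ℝ) (A : Finset ℕ), ∑ i ∈ A, y i = B →
      ∑ i ∈ A, c * (y i : ℝ) = c * B := by
    intro c A hA
    rw [← Finset.mul_sum, ← hA]
    push_cast
    rfl
  have hpre : ∀ (c : ℝ) (A : Finset ℕ) (k : ℕ), 0 ≤ c → (∀ i ∈ A, i ∈ Finset.Icc 1 n) →
      0 ≤ ∑ j ∈ A with j < k, c * (y j : ℝ) := by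
    intro c A k hc hA
    refine Finset.sum_nonneg fun j hj => mul_nonneg hc ?_
    exact_mod_cast (hy j (hA j (Finset.mem_filter.1 hj).1)).le
  have hx : ∀ i ∈ Finset.Icc 1 n, i ≠ 0 ∧ i ≠ n + 1 ∧ i < n + 2 := by
    intro i hi
    rw [Finset.mem_Icc] at hi
    omega
  -- Indices outside `S` and `R`, in particular those of the two outer sensors, start at time `0`.
  refine ⟨fun i => if i ∈ R then 1/2 else 1/6,
    fun i => if i ∈ S then ∑ j ∈ S with j < i, 6 * (y j : ℝ)
      else if i ∈ R then 6 * B + ∑ j ∈ R with j < i, 2 * (y j : ℝ) else 0, ?_, ?_, ?_⟩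
  · intro i _
    dsimp only
    split_ifs <;> norm_num
  · intro i _
    dsimp only
    split_ifs
    · exact hpre 6 S i (by norm_num) hS
    · have := hpre 2 R i (by norm_num) hRI
      positivity
    · exact le_rfl
  · intro u hu t ht
    obtain ⟨hu0, hu1⟩ := hu
    obtain ⟨ht0, ht1⟩ := ht
    rcases le_or_gt t (6 * (B:ℝ)) with h6 | h6
    · have h0I : (0:ℕ) ∉ Finset.Icc 1 n := by simp
      have hnI : n + 1 ∉ Finset.Icc 1 n := by simp
      rcases le_or_gt u (1/3) with hl | hl
      · refine ⟨0, by simp, ?_⟩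
        simp only [if_neg (fun h => h0I (hRI 0 h)), if_neg (fun h => h0I (hS h))]
        refine ⟨by norm_num, ?_, ht0, ?_⟩
        · rw [if_pos trivial, abs_le]
          constructor <;> linarith
        · simp
          linarith
      rcases le_or_gt (2/3) u with hr | hr
      · refine ⟨n + 1, by simp, ?_⟩
        simp only [if_neg (fun h => hnI (hRI _ h)), if_neg (fun h => hnI (hS h))]
        refine ⟨by norm_num, ?_, ht0, ?_⟩
        · rw [if_neg (Nat.succ_ne_zero n), if_pos trivial, abs_le]
          constructor <;> linarith
        · simp
          linarith
      obtain ⟨i, hi, h1, h2⟩ := exists_active (fun j => 6 * (y j : ℝ)) S (hne S hSB) t ht0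
        (by rw [hsum 6 S hSB]; exact h6)
      obtain ⟨hi0, hin, hi2⟩ := hx i (hS hi)
      have hiR : i ∉ R := fun h => (Finset.mem_sdiff.1 h).2 hi
      refine ⟨i, Finset.mem_range.2 hi2, ?_⟩
      simp only [if_neg hiR, if_pos hi, hi0, hin, or_self, if_false]
      refine ⟨by norm_num, ?_, h1, ?_⟩
      · rw [abs_le]
        constructor <;> linarith
      · linarith
    · obtain ⟨i, hi, h1, h2⟩ := exists_active (fun j => 2 * (y j : ℝ)) R (hne R hRB)
        (t - 6 * B) (by linarith) (by rw [hsum 2 R hRB]; linarith)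
      obtain ⟨hi0, hin, hi2⟩ := hx i (hRI i hi)
      have hiS : i ∉ S := (Finset.mem_sdiff.1 hi).2
      refine ⟨i, Finset.mem_range.2 hi2, ?_⟩
      simp only [if_pos hi, if_neg hiS, hi0, hin, or_self, if_false]
      refine ⟨by norm_num, ?_, by linarith, ?_⟩
      · rw [abs_le]
        constructor <;> linarith
      · linarith
end

section
/- Let y_1,…,y_n be positive rationals and B = (1/2)·∑_{i=1}^n y_i. Consider the OnceSC instance with n+2 sensors: a sensor at 1/6 with battery B, n sensors at 1/2 with batteries y_1,…,y_n, and a sensor at 5/6 with battery B. If this instance admits a feasible schedule with lifetime 8B, then there exists a subset S ⊆ {1,…,n} with ∑_{i∈S} y_i = B. -/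
/-- A finite family of intervals covering `[0, T]` has total length at least `T`. -/
lemma le_sum_of_Icc_cover (s : Finset ℕ) (τ l : ℕ → ℝ) (T : ℝ) (hl : ∀ i ∈ s, 0 ≤ l i)
    (h : ∀ t ∈ Set.Icc (0:ℝ) T, ∃ i ∈ s, τ i ≤ t ∧ t ≤ τ i + l i) :
    T ≤ ∑ i ∈ s, l i := by
  have hsub : Set.Icc (0:ℝ) T ⊆ ⋃ i ∈ s, Set.Icc (τ i) (τ i + l i) := by
    intro t ht
    obtain ⟨i, hi, h1, h2⟩ := h t ht
    simp only [Set.mem_iUnion]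
    exact ⟨i, hi, h1, h2⟩
  have h1 : MeasureTheory.volume (Set.Icc (0:ℝ) T)
      ≤ ∑ i ∈ s, MeasureTheory.volume (Set.Icc (τ i) (τ i + l i)) :=
    (MeasureTheory.measure_mono hsub).trans (MeasureTheory.measure_biUnion_finset_le _ _)
  simp only [Real.volume_Icc, sub_zero, add_sub_cancel_left] at h1
  rw [← ENNReal.ofReal_sum_of_nonneg hl] at h1
  exact (ENNReal.ofReal_le_ofReal_iff (Finset.sum_nonneg hl)).1 h1

open Classical in
/-- The sensors reaching a fixed point must be alive for a total time of at least the lifetime. -/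
lemma lifetime_le_sum (s : Finset ℕ) (x b ρ τ : ℕ → ℝ) (T : ℝ) (hb : ∀ i ∈ s, 0 ≤ b i)
    (h : IsLifetime s x b ρ τ T) (u : ℝ) (hu : u ∈ Set.Icc (0:ℝ) 1) :
    T ≤ ∑ i ∈ s, if 0 < ρ i ∧ |u - x i| ≤ ρ i then b i / ρ i else 0 := by
  apply le_sum_of_Icc_cover s τ
  · intro i hi
    split_ifs with hc
    · exact div_nonneg (hb i hi) hc.1.le
    · exact le_rfl
  · intro t ht
    obtain ⟨i, hi, h1, h2, h3, h4⟩ := h u hu t ht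
    exact ⟨i, hi, h3, by rwa [if_pos ⟨h1, h2⟩]⟩

open Classical in
/-- `lifetime_le_sum` for the partition instance, with the two outer sensors split off. -/
lemma lifetime_le_split (n : ℕ) (y ρ τ : ℕ → ℝ) (B T : ℝ) (hB : 0 ≤ B)
    (hy : ∀ i ∈ Finset.Icc 1 n, 0 < y i)
    (h : IsLifetime (Finset.range (n+2))
        (fun i => if i = 0 then 1/6 else if i = n+1 then 5/6 else 1/2)
        (fun i => if i = 0 ∨ i = n+1 then B else y i) ρ τ T)
    (u : ℝ) (hu : u ∈ Set.Icc (0:ℝ) 1) :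
    T ≤ (if 0 < ρ 0 ∧ |u - 1/6| ≤ ρ 0 then B / ρ 0 else 0)
      + (if 0 < ρ (n+1) ∧ |u - 5/6| ≤ ρ (n+1) then B / ρ (n+1) else 0)
      + ∑ i ∈ Finset.Icc 1 n, if 0 < ρ i ∧ |u - 1/2| ≤ ρ i then y i / ρ i else 0 := by
  have hr : Finset.range (n+2) = insert 0 (insert (n+1) (Finset.Icc 1 n)) := by
    ext i; simp only [Finset.mem_range, Finset.mem_insert, Finset.mem_Icc]; omega
  have key := lifetime_le_sum _ _ _ ρ τ T ?_ h u hu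
  · rw [hr, Finset.sum_insert (by simp), Finset.sum_insert (by simp)] at key
    simp only [if_true, true_or, or_true, Nat.add_eq_zero_iff, one_ne_zero, and_false, if_false] at key
    rw [← add_assoc] at key
    refine key.trans_eq ?_
    congr 1
    apply Finset.sum_congr rfl
    intro i hi
    rw [Finset.mem_Icc] at hi
    have h0 : i ≠ 0 := by omega
    have h1 : i ≠ n+1 := by omega
    simp only [h0, h1, if_false, or_self]
  · intro i hi
    rw [Finset.mem_range] at hi
    split_ifs with hc
    · exact hB
    · exact (hy i (Finset.mem_Icc.2 (by omega))).le

open Classical in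
lemma central_le_at_end (s : Finset ℕ) (y ρ : ℕ → ℝ) (hy : ∀ i ∈ s, 0 < y i) :
    (∑ i ∈ s, if 0 < ρ i ∧ (1/2:ℝ) ≤ ρ i then y i / ρ i else 0)
      ≤ 2 * ∑ i ∈ s with 1/2 ≤ ρ i, y i := by
  rw [Finset.mul_sum, Finset.sum_filter]
  apply Finset.sum_le_sum
  intro i hi
  have := hy i hi
  split_ifs with h1 h2 h2
  · rw [div_le_iff₀ h1.1]; nlinarith [h1.2]
  · exact absurd h1.2 h2
  · positivity
  · exact le_rfl

open Classical in
lemma central_le_at_dist (s : Finset ℕ) (y ρ : ℕ → ℝ) (hy : ∀ i ∈ s, 0 < y i) (q : ℝ) (hq : 0 < q) :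
    (∑ i ∈ s, if 0 < ρ i ∧ q ≤ ρ i then y i / ρ i else 0)
      ≤ 2 * (∑ i ∈ s with 1/2 ≤ ρ i, y i)
        + ((∑ i ∈ s, y i) - ∑ i ∈ s with 1/2 ≤ ρ i, y i) / q := by
  have hD : (∑ i ∈ s, y i) - ∑ i ∈ s with 1/2 ≤ ρ i, y i = ∑ i ∈ s with ¬ 1/2 ≤ ρ i, y i := by
    rw [← Finset.sum_filter_add_sum_filter_not s (fun i => 1/2 ≤ ρ i) y]; ring
  rw [hD, Finset.mul_sum, Finset.sum_div, Finset.sum_filter, Finset.sum_filter,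
    ← Finset.sum_add_distrib]
  apply Finset.sum_le_sum
  intro i hi
  have hyi := hy i hi
  by_cases h2 : 1/2 ≤ ρ i
  · rw [if_pos h2, if_neg (not_not.2 h2), add_zero]
    split_ifs with h1
    · rw [div_le_iff₀ h1.1]; nlinarith
    · positivity
  · rw [if_neg h2, if_pos h2, zero_add]
    split_ifs with h1
    · exact div_le_div_of_nonneg_left hyi.le hq h1.2
    · positivity

/-- The counting bound at the ends and the limiting one at distance `1/3 - r` from the centre
determine the total charge `H` of the wide central sensors. -/
lemma charge_eq_of_bounds (B H r : ℝ) (hB : 0 < B) (hr : 1/6 ≤ r) (h1 : 8 * B ≤ B / r + 2 * H)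
    (h2 : (8 * B - 2 * H) * (1/3 - r) ≤ 2 * B - H) : H = B := by
  have hr0 : 0 < r := by linarith
  have h3 : 2 * r * (2 * B - H) ≤ B * (1 - 4 * r) := by
    have : B / r * r = B := div_mul_cancel₀ _ hr0.ne'
    nlinarith
  -- Multiplying `h2` by `2 r` and inserting `h3`, the terms quadratic in `r` cancel.
  have h4 : r = 1/6 := by
    have h5 : B * (r - 1/6) ≤ 0 := by nlinarith
    have h6 : r - 1/6 ≤ 0 := nonpos_of_mul_nonpos_right h5 hB
    linarith
  subst h4
  linarith

/-- If the OnceSC instance with sensors at `1/6` and `5/6` of battery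
`B = (∑ y_i)/2` and sensors at `1/2` with batteries `y_1,…,y_n` admits a
feasible schedule with lifetime `8B`, then `{y_1,…,y_n}` has a subset summing
to `B`. -/
theorem max_lifetime_implies_partition
    (n : ℕ) (hn : 1 ≤ n) (y : ℕ → ℚ)
    (hy : ∀ i ∈ Finset.Icc 1 n, 0 < y i)
    (B : ℚ) (hB : B = (∑ i ∈ Finset.Icc 1 n, y i) / 2)
    (hsched : ∃ ρ τ : ℕ → ℝ,
      (∀ i ∈ Finset.range (n+2), 0 ≤ ρ i) ∧
      (∀ i ∈ Finset.range (n+2), 0 ≤ τ i) ∧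
      IsLifetime (Finset.range (n+2))
        (fun i => if i = 0 then 1/6 else if i = n+1 then 5/6 else 1/2)
        (fun i => if i = 0 ∨ i = n+1 then (B:ℝ) else (y i : ℝ))
        ρ τ (8 * (B:ℝ))) :
    ∃ S ⊆ Finset.Icc 1 n, ∑ i ∈ S, y i = B := by
  classical
  obtain ⟨ρ, τ, -, -, hlife⟩ := hsched
  have hyR : ∀ i ∈ Finset.Icc 1 n, (0:ℝ) < (y i : ℝ) := fun i hi => by exact_mod_cast hy i hi
  have hsum : ∑ i ∈ Finset.Icc 1 n, (y i : ℝ) = 2 * (B:ℝ) := by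
    rw [hB]; push_cast; ring
  have hBpos : (0:ℝ) < B := by
    have : 0 < ∑ i ∈ Finset.Icc 1 n, (y i : ℝ) :=
      Finset.sum_pos hyR ⟨1, Finset.mem_Icc.2 ⟨le_rfl, hn⟩⟩
    linarith
  have key := lifetime_le_split n (fun i => (y i : ℝ)) ρ τ B (8 * B) hBpos.le hyR hlife
  refine ⟨{i ∈ Finset.Icc 1 n | 1/2 ≤ ρ i}, Finset.filter_subset _ _, ?_⟩
  suffices hH : ∑ i ∈ Finset.Icc 1 n with 1/2 ≤ ρ i, (y i : ℝ) = B by exact_mod_cast hH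
  have hend := central_le_at_end (Finset.Icc 1 n) (fun i => (y i : ℝ)) ρ hyR
  have hdist := central_le_at_dist (Finset.Icc 1 n) (fun i => (y i : ℝ)) ρ hyR
  have hHle : ∑ i ∈ Finset.Icc 1 n with 1/2 ≤ ρ i, (y i : ℝ) ≤ 2 * B := by
    rw [← hsum]
    exact Finset.sum_le_sum_of_subset_of_nonneg (Finset.filter_subset _ _)
      fun i hi _ => (hyR i hi).le
  simp only [hsum] at hdist
  generalize (∑ i ∈ Finset.Icc 1 n with 1/2 ≤ ρ i, (y i : ℝ)) = H at *
  have k0 := key 0 (by norm_num)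
  have k1 := key 1 (by norm_num)
  rw [show |(0:ℝ) - 1/6| = 1/6 by norm_num [abs_of_nonneg, abs_of_nonpos],
    show |(0:ℝ) - 5/6| = 5/6 by norm_num [abs_of_nonneg, abs_of_nonpos],
    show |(0:ℝ) - 1/2| = 1/2 by norm_num [abs_of_nonneg, abs_of_nonpos]] at k0
  rw [show |(1:ℝ) - 1/6| = 5/6 by norm_num [abs_of_nonneg, abs_of_nonpos],
    show |(1:ℝ) - 5/6| = 1/6 by norm_num [abs_of_nonneg, abs_of_nonpos],
    show |(1:ℝ) - 1/2| = 1/2 by norm_num [abs_of_nonneg, abs_of_nonpos]] at k1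
  generalize ρ 0 = a at *
  generalize ρ (n+1) = c at *
  generalize (B:ℝ) = b at *
  -- An outer sensor reaching the opposite end lives for at most `6b/5`.
  have far : ∀ z : ℝ, (if 0 < z ∧ 5/6 ≤ z then b / z else 0) ≤ 6/5 * b := by
    intro z
    split_ifs with h
    · rw [div_le_iff₀ h.1]; nlinarith [h.2]
    · positivity
  have near : ∀ z : ℝ, 14/5 * b ≤ (if 0 < z ∧ 1/6 ≤ z then b / z else 0) →
      0 < z ∧ 1/6 ≤ z ∧ z < 5/6 := by
    intro z hz
    split_ifs at hz with h
    · rw [le_div_iff₀ h.1] at hz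
      refine ⟨h.1, h.2, ?_⟩
      by_contra! h'
      nlinarith
    · linarith
  obtain ⟨ha0, ha1, ha2⟩ := near a (by linarith [far c])
  obtain ⟨hc0, hc1, hc2⟩ := near c (by linarith [far a])
  rw [if_pos ⟨ha0, ha1⟩, if_neg (fun h => absurd h.2 (not_le.2 hc2))] at k0
  rw [if_neg (fun h => absurd h.2 (not_le.2 ha2)), if_pos ⟨hc0, hc1⟩] at k1
  have ea : 8 * b ≤ b / a + 2 * H := by linarith
  have ec : 8 * b ≤ b / c + 2 * H := by linarith
  have quarter : ∀ z : ℝ, 0 < z → 8 * b ≤ b / z + 2 * H → z ≤ 1/4 := by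
    intro z hz h
    have h4 : 4 * b ≤ b / z := by linarith
    rw [le_div_iff₀ hz] at h4
    by_contra! h'
    nlinarith
  have ha4 := quarter a ha0 ea
  have hc4 := quarter c hc0 ec
  -- Counting at the distance `1/3 - r` itself would include the outer sensor, whose interval is
  -- closed; the bound there is obtained as a limit of those at smaller distances `q`.
  have limit : ∀ r : ℝ, r ≤ 1/4 → (∀ q : ℝ, 0 < q → q < 1/3 - r → 8 * b ≤ 2 * H + (2 * b - H) / q) →
      (8 * b - 2 * H) * (1/3 - r) ≤ 2 * b - H := by
    intro r hr h
    have hpos : 0 < 8 * b - 2 * H := by linarith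
    rw [mul_comm, ← le_div_iff₀ hpos]
    apply le_of_forall_lt_imp_le_of_dense
    intro q hq
    rw [le_div_iff₀ hpos]
    rcases le_or_gt q 0 with hq0 | hq0
    · nlinarith
    · have h' : 8 * b - 2 * H ≤ (2 * b - H) / q := by linarith [h q hq0 hq]
      rw [le_div_iff₀ hq0] at h'
      linarith
  -- Points on the central side of the larger outer interval, so that neither outer sensor reaches them.
  rcases le_total c a with hca | hac
  · refine charge_eq_of_bounds b H a hBpos ha1 ea (limit a ha4 fun q hq0 hq => ?_)
    have k := key (1/2 - q) ⟨by linarith, by linarith⟩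
    rw [if_neg, if_neg, show |1/2 - q - 1/2| = q by
      rw [show 1/2 - q - 1/2 = -q by ring, abs_neg, abs_of_pos hq0]] at k
    · linarith [hdist q hq0]
    · rintro ⟨-, h⟩; linarith [neg_abs_le (1/2 - q - 5/6)]
    · rintro ⟨-, h⟩; linarith [le_abs_self (1/2 - q - 1/6)]
  · refine charge_eq_of_bounds b H c hBpos hc1 ec (limit c hc4 fun q hq0 hq => ?_)
    have k := key (1/2 + q) ⟨by linarith, by linarith⟩
    rw [if_neg, if_neg, show |1/2 + q - 1/2| = q by
      rw [show 1/2 + q - 1/2 = q by ring, abs_of_pos hq0]] at k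
    · linarith [hdist q hq0]
    · rintro ⟨-, h⟩; linarith [neg_abs_le (1/2 + q - 5/6)]
    · rintro ⟨-, h⟩; linarith [le_abs_self (1/2 + q - 1/6)]
end
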